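/- For every dimension s ≥ 1 and every N ≥ 1 there exists a set of N points z_1, …, z_N in [0,1]^s whose star-discrepancy satisfies D*_N(z_1, …, z_N) ≤ 13 · √s/√N. -/

import Mathlib

/-!
Take independent uniform points and compare empirical and true volume of the boxes `[0, x]` by
chaining. For `k ≥ 1` a finite `16 ^ (-k)`-bracketing cover of the boxes consists of the empty set
and the boxes with corners in the geometric grid of the powers of `1 - 16 ^ (-k) / s`, those of
negligible volume being omitted. The volume of such a box depends only on the sum of the
exponents, so that a binomial coefficient counts them: there are at most `(e * 64 ^ k) ^ s`, and
since the base does not depend on `s`, no logarithm of `s` is lost.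

A box of level `k + 1` contains a set of level `k` from which it differs by measure at most
`16 ^ (-k)`. By Bernstein's inequality the discrepancy of such a small difference exceeds
`2 * (3 + k) * 4 ^ (-k) * √(s / N)` with probability at most `2 * exp (-s * (3 + k) ^ 2)`, and the
sum of these probabilities over all differences is less than `1`. The deviations add up to less than
`9 * √(s / N)`; stopping at the first level of mesh at most `4 * √(s / N)` costs another
`4 * √(s / N)`.
-/

open MeasureTheory Real

/-- The star-discrepancy of the point set `z 0, …, z (N-1)` in `[0,1]^s`. -/
noncomputable def starDiscrepancy (s N : ℕ) (z : Fin N → (Fin s → ℝ)) : ℝ :=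
  ⨆ x : (Set.Icc (0 : Fin s → ℝ) 1),
    |(Nat.card {n : Fin N // z n ∈ Set.Icc 0 (x : Fin s → ℝ)} : ℝ) / N
      - ∏ i, (x : Fin s → ℝ) i|

open Finset ProbabilityTheory
open scoped unitInterval

section Bernstein

variable {Ω : Type*} [MeasurableSpace Ω] {μ : Measure Ω} [IsProbabilityMeasure μ]

theorem mgf_le_exp_sq_mul_variance {X : Ω → ℝ} (hX : AEMeasurable X μ)
    (hbdd : ∀ᵐ ω ∂μ, |X ω| ≤ 1) (hmean : μ[X] = 0) {t : ℝ} (ht : |t| ≤ 1) :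
    mgf X μ t ≤ exp (t ^ 2 * Var[X; μ]) := by
  have hmem (p) : MemLp X p μ := .of_bound hX.aestronglyMeasurable 1 hbdd
  have hint : Integrable X μ := memLp_one_iff_integrable.1 (hmem 1)
  have hsq : Integrable (fun ω => X ω ^ 2) μ := (hmem 2).integrable_sq
  have hquad : (fun ω => exp (t * X ω)) ≤ᵐ[μ] fun ω => 1 + t * X ω + t ^ 2 * X ω ^ 2 := by
    filter_upwards [hbdd] with ω hω
    have htX : |t * X ω| ≤ 1 := by
      rw [abs_mul]
      exact mul_le_one₀ ht (abs_nonneg _) hω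
    linarith [(abs_le.1 (abs_exp_sub_one_sub_id_le htX)).2, mul_pow t (X ω) 2]
  have hquad_int : Integrable (fun ω => 1 + t * X ω) μ :=
    (integrable_const 1).add (hint.const_mul t)
  calc mgf X μ t ≤ ∫ ω, (1 + t * X ω + t ^ 2 * X ω ^ 2) ∂μ :=
        integral_mono_of_nonneg (.of_forall fun ω => (exp_pos _).le)
          (hquad_int.add (hsq.const_mul _)) hquad
    _ = t ^ 2 * Var[X; μ] + 1 := by
        rw [integral_add hquad_int (hsq.const_mul _),
          integral_add (integrable_const 1) (hint.const_mul t), integral_const_mul,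
          integral_const_mul, hmean, variance_of_integral_eq_zero hX hmean]
        simp [add_comm]
    _ ≤ exp (t ^ 2 * Var[X; μ]) := add_one_le_exp _

variable {κ : Type*} {X : κ → Ω → ℝ} {s : Finset κ}

theorem measure_sum_ge_le_exp_of_iIndepFun (hindep : iIndepFun X μ)
    (hX : ∀ i, Measurable (X i)) (hbdd : ∀ i ∈ s, ∀ᵐ ω ∂μ, |X i ω| ≤ 1)
    (hmean : ∀ i ∈ s, μ[X i] = 0) {V ε : ℝ} (hV : ∑ i ∈ s, Var[X i; μ] ≤ V) (hε : 0 < ε)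
    (hεV : ε ≤ 2 * V) :
    μ.real {ω | ε ≤ ∑ i ∈ s, X i ω} ≤ exp (-(ε ^ 2 / (4 * V))) := by
  have hV0 : 0 < V := by linarith
  -- The minimizer of the exponent `t ^ 2 * V - t * ε`.
  set t : ℝ := ε / (2 * V)
  have ht0 : 0 ≤ t := by positivity
  have ht1 : |t| ≤ 1 := by rwa [abs_of_nonneg ht0, div_le_one (by positivity)]
  have hmgf : mgf (∑ i ∈ s, X i) μ t ≤ exp (t ^ 2 * V) := by
    rw [hindep.mgf_sum hX]
    calc ∏ i ∈ s, mgf (X i) μ t ≤ ∏ i ∈ s, exp (t ^ 2 * Var[X i; μ]) :=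
          prod_le_prod (fun _ _ => mgf_nonneg) fun i hi =>
            mgf_le_exp_sq_mul_variance (hX i).aemeasurable (hbdd i hi) (hmean i hi) ht1
      _ = exp (t ^ 2 * ∑ i ∈ s, Var[X i; μ]) := by rw [← exp_sum, mul_sum]
      _ ≤ exp (t ^ 2 * V) := by gcongr
  have hint : Integrable (fun ω => exp (t * (∑ i ∈ s, X i) ω)) μ :=
    hindep.integrable_exp_mul_sum hX fun i hi =>
      integrable_exp_mul_of_mem_Icc (hX i).aemeasurable ((hbdd i hi).mono fun _ => abs_le.1)
  have hexp : -t * ε + t ^ 2 * V = -(ε ^ 2 / (4 * V)) := by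
    simp only [t]
    field_simp
    ring
  calc μ.real {ω | ε ≤ ∑ i ∈ s, X i ω} = μ.real {ω | ε ≤ (∑ i ∈ s, X i) ω} := by
        simp only [Finset.sum_apply]
    _ ≤ exp (-t * ε) * mgf (∑ i ∈ s, X i) μ t := measure_ge_le_exp_mul_mgf ε ht0 hint
    _ ≤ exp (-t * ε) * exp (t ^ 2 * V) := by gcongr
    _ = exp (-(ε ^ 2 / (4 * V))) := by rw [← exp_add, hexp]

theorem measure_abs_sum_ge_le_two_mul_exp_of_iIndepFun (hindep : iIndepFun X μ)
    (hX : ∀ i, Measurable (X i)) (hbdd : ∀ i ∈ s, ∀ᵐ ω ∂μ, |X i ω| ≤ 1)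
    (hmean : ∀ i ∈ s, μ[X i] = 0) {V ε : ℝ} (hV : ∑ i ∈ s, Var[X i; μ] ≤ V) (hε : 0 < ε)
    (hεV : ε ≤ 2 * V) :
    μ.real {ω | ε ≤ |∑ i ∈ s, X i ω|} ≤ 2 * exp (-(ε ^ 2 / (4 * V))) := by
  have hupper := measure_sum_ge_le_exp_of_iIndepFun hindep hX hbdd hmean hV hε hεV
  have hlower : μ.real {ω | ε ≤ ∑ i ∈ s, (-X i) ω} ≤ exp (-(ε ^ 2 / (4 * V))) :=
    measure_sum_ge_le_exp_of_iIndepFun (X := fun i => -X i)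
      (hindep.comp (fun _ x => -x) fun _ => measurable_neg) (fun i => (hX i).neg)
      (by simpa using hbdd) (fun i hi => by simp [integral_neg, hmean i hi])
      (by simpa only [variance_neg] using hV) hε hεV
  have hunion : {ω | ε ≤ |∑ i ∈ s, X i ω|} =
      {ω | ε ≤ ∑ i ∈ s, X i ω} ∪ {ω | ε ≤ ∑ i ∈ s, (-X i) ω} := by
    ext ω
    simp [le_abs]
  rw [hunion, two_mul]
  exact (measureReal_union_le _ _).trans (add_le_add hupper hlower)

theorem variance_indicator_one_le {A : Set Ω} (hA : MeasurableSet A) :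
    Var[A.indicator 1; μ] ≤ μ.real A := by
  have hsq : (A.indicator 1 : Ω → ℝ) ^ 2 = A.indicator 1 := by
    ext ω
    by_cases hω : ω ∈ A <;> simp [hω]
  calc Var[A.indicator 1; μ] ≤ μ[(A.indicator 1 : Ω → ℝ) ^ 2] :=
        variance_le_expectation_sq (measurable_one.indicator hA).aestronglyMeasurable
    _ = μ.real A := by rw [hsq, integral_indicator_one hA]

theorem exists_forall_notMem_of_sum_measureReal_lt_one {B : κ → Set Ω}
    (h : ∑ i ∈ s, μ.real (B i) < 1) : ∃ ω, ∀ i ∈ s, ω ∉ B i := by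
  by_contra! hcover
  have hunion : ⋃ i ∈ s, B i = Set.univ :=
    Set.eq_univ_of_forall fun ω => by simpa only [Set.mem_iUnion, exists_prop] using hcover ω
  have := measureReal_biUnion_finset_le (μ := μ) s B
  rw [hunion, probReal_univ] at this
  exact this.not_gt h

end Bernstein

section LocalDiscrepancy

variable {Ω : Type*} [MeasurableSpace Ω] {κ : Type*} [Fintype κ]

/-- The signed local discrepancy of the points `z` in the set `A`: the fraction of the points lying
in `A`, minus the measure of `A`. The sign makes it additive in `A`. -/
noncomputable def localDiscrepancy (μ : Measure Ω) (z : κ → Ω) (A : Set Ω) : ℝ :=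
  (∑ n, A.indicator 1 (z n)) / Fintype.card κ - μ.real A

variable (μ : Measure Ω) (z : κ → Ω)

@[simp]
theorem localDiscrepancy_empty : localDiscrepancy μ z ∅ = 0 := by
  simp [localDiscrepancy]

@[simp]
theorem localDiscrepancy_univ [IsProbabilityMeasure μ] [Nonempty κ] :
    localDiscrepancy μ z Set.univ = 0 := by
  simp [localDiscrepancy]

variable {A B D : Set Ω}

theorem neg_measureReal_le_localDiscrepancy : -μ.real A ≤ localDiscrepancy μ z A := by
  have : 0 ≤ (∑ n, A.indicator (1 : Ω → ℝ) (z n)) / Fintype.card κ :=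
    div_nonneg (sum_nonneg fun _ _ => Set.indicator_nonneg (fun _ _ => zero_le_one) _)
      (Nat.cast_nonneg _)
  rw [localDiscrepancy]
  linarith

theorem localDiscrepancy_add_sdiff [IsFiniteMeasure μ] (hA : MeasurableSet A) (hAB : A ⊆ B) :
    localDiscrepancy μ z A + localDiscrepancy μ z (B \ A) = localDiscrepancy μ z B := by
  have hind (x) : (B \ A).indicator (1 : Ω → ℝ) x = B.indicator 1 x - A.indicator 1 x :=
    congrFun (Set.indicator_sdiff hAB 1) x
  simp only [localDiscrepancy, hind, sum_sub_distrib, measureReal_sdiff (μ := μ) hAB hA]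
  ring

theorem localDiscrepancy_le_add_measureReal_sdiff [IsFiniteMeasure μ] (hA : MeasurableSet A)
    (hAB : A ⊆ B) : localDiscrepancy μ z A ≤ localDiscrepancy μ z B + μ.real (B \ A) := by
  rw [← localDiscrepancy_add_sdiff μ z hA hAB]
  linarith [neg_measureReal_le_localDiscrepancy μ z (A := B \ A)]

theorem abs_localDiscrepancy_le_of_bracket [IsFiniteMeasure μ] (hA : MeasurableSet A)
    (hD : MeasurableSet D) (hAD : A ⊆ D) (hDB : D ⊆ B) {c : ℝ}
    (hcA : |localDiscrepancy μ z A| ≤ c) (hcB : |localDiscrepancy μ z B| ≤ c) :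
    |localDiscrepancy μ z D| ≤ c + μ.real (B \ A) := by
  have hlower := localDiscrepancy_le_add_measureReal_sdiff μ z hA hAD
  have hupper := localDiscrepancy_le_add_measureReal_sdiff μ z hD hDB
  have hDA : μ.real (D \ A) ≤ μ.real (B \ A) := measureReal_mono (Set.sdiff_subset_sdiff_left hDB)
  have hBD : μ.real (B \ D) ≤ μ.real (B \ A) := measureReal_mono (Set.sdiff_subset_sdiff_right hAD)
  rw [abs_le]
  constructor <;> linarith [abs_le.1 hcA, abs_le.1 hcB]

theorem card_mul_localDiscrepancy [Nonempty κ] :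
    Fintype.card κ * localDiscrepancy μ z A = ∑ n, (A.indicator 1 (z n) - μ.real A) := by
  simp [localDiscrepancy, sum_sub_distrib, mul_sub, mul_div_cancel₀]

theorem measure_abs_localDiscrepancy_ge_le_two_mul_exp [IsProbabilityMeasure μ] [Nonempty κ]
    (hA : MeasurableSet A) {v a : ℝ} (hAv : μ.real A ≤ v) (ha : 0 < a) (hav : a ≤ 2 * v) :
    (Measure.pi fun _ : κ => μ).real {z | a ≤ |localDiscrepancy μ z A|} ≤
      2 * exp (-(Fintype.card κ * a ^ 2 / (4 * v))) := by
  have hcard : (0 : ℝ) < Fintype.card κ := by positivity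
  have hind : Measurable (A.indicator (1 : Ω → ℝ)) := measurable_one.indicator hA
  set Y : Ω → ℝ := fun ω => A.indicator 1 ω - μ.real A
  have hY : Measurable Y := hind.sub_const _
  have hbdd (ω : Ω) : |Y ω| ≤ 1 :=
    abs_sub_le_of_nonneg_of_le (Set.indicator_nonneg (fun _ _ => zero_le_one) ω)
      (Set.indicator_le_self' (fun _ _ => zero_le_one) ω) measureReal_nonneg measureReal_le_one
  have hmean : μ[Y] = 0 := by
    have hint : Integrable (A.indicator (1 : Ω → ℝ)) μ := (integrable_const 1).indicator hA
    exact (integral_sub hint (integrable_const _)).trans (by simp [integral_indicator_one hA])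
  have hvar (n : κ) : Var[fun z : κ → Ω => Y (z n); Measure.pi fun _ => μ] ≤ v := by
    rw [(measurePreserving_eval (fun _ => μ) n).variance_fun_comp hY.aemeasurable,
      variance_sub_const hind.aestronglyMeasurable]
    exact (variance_indicator_one_le hA).trans hAv
  have hset : {z : κ → Ω | a ≤ |localDiscrepancy μ z A|} =
      {z | Fintype.card κ * a ≤ |∑ n, Y (z n)|} := by
    ext z
    rw [Set.mem_ofPred_eq, Set.mem_ofPred_eq, ← card_mul_localDiscrepancy, abs_mul,
      abs_of_pos hcard, mul_le_mul_iff_right₀ hcard]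
  have hexp : (Fintype.card κ * a) ^ 2 / (4 * (Fintype.card κ * v)) =
      Fintype.card κ * a ^ 2 / (4 * v) := by
    field_simp
  rw [hset, ← hexp]
  refine measure_abs_sum_ge_le_two_mul_exp_of_iIndepFun
    (iIndepFun_pi fun _ => hY.aemeasurable) (fun n => hY.comp (measurable_pi_apply n))
    (fun n _ => .of_forall fun z => hbdd (z n))
    (fun n _ => (integral_comp_eval hY.aestronglyMeasurable).trans hmean) ?_ (by positivity)
    (by nlinarith)
  simpa using sum_le_card_nsmul univ _ v fun n _ => hvar n

end LocalDiscrepancy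

section Chaining

variable {Ω : Type*} [MeasurableSpace Ω] {κ : Type*} [Fintype κ]

/-- The finite subfamily `𝒞` of the class `𝒟` is a `δ`-bracketing cover: every set of `𝒟` lies
between two members of `𝒞` which differ by measure at most `δ`. -/
structure IsBracketingCover (μ : Measure Ω) (𝒟 : Set (Set Ω)) (δ : ℝ) (𝒞 : Finset (Set Ω)) :
    Prop where
  subset : ↑𝒞 ⊆ 𝒟
  exists_bracket : ∀ D ∈ 𝒟, ∃ A ∈ 𝒞, ∃ B ∈ 𝒞, A ⊆ D ∧ D ⊆ B ∧ μ.real (B \ A) ≤ δ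

variable {μ : Measure Ω} {𝒟 : Set (Set Ω)}

theorem IsBracketingCover.exists_subset [IsFiniteMeasure μ] {δ : ℝ} {𝒞 : Finset (Set Ω)}
    (h𝒞 : IsBracketingCover μ 𝒟 δ 𝒞) {D : Set Ω} (hD : D ∈ 𝒟) :
    ∃ A ∈ 𝒞, A ⊆ D ∧ μ.real (D \ A) ≤ δ := by
  obtain ⟨A, hA, B, -, hAD, hDB, hδ⟩ := h𝒞.exists_bracket D hD
  exact ⟨A, hA, hAD, (measureReal_mono (Set.sdiff_subset_sdiff_left hDB)).trans hδ⟩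

theorem isBracketingCover_empty_univ [IsProbabilityMeasure μ] (hempty : ∅ ∈ 𝒟)
    (huniv : Set.univ ∈ 𝒟) : IsBracketingCover μ 𝒟 1 {∅, Set.univ} where
  subset := by simp [Set.insert_subset_iff, hempty, huniv]
  exists_bracket D _ :=
    ⟨∅, by simp, Set.univ, by simp, D.empty_subset, D.subset_univ, measureReal_le_one⟩

theorem abs_localDiscrepancy_le_sum_of_chain [IsFiniteMeasure μ] {z : κ → Ω}
    {𝒞 : ℕ → Finset (Set Ω)} {a : ℕ → ℝ} {K : ℕ}
    (hzero : ∀ A ∈ 𝒞 0, localDiscrepancy μ z A = 0)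
    (hlink : ∀ k < K, ∀ A ∈ 𝒞 (k + 1), ∃ B ∈ 𝒞 k, MeasurableSet B ∧ B ⊆ A ∧
      |localDiscrepancy μ z (A \ B)| ≤ a k) :
    ∀ A ∈ 𝒞 K, |localDiscrepancy μ z A| ≤ ∑ k ∈ range K, a k := by
  induction K with
  | zero => intro A hA; simp [hzero A hA]
  | succ K ih =>
    intro A hA
    obtain ⟨B, hB, hBmeas, hBA, hAB⟩ := hlink K (lt_add_one K) A hA
    rw [← localDiscrepancy_add_sdiff μ z hBmeas hBA, sum_range_succ]
    exact (abs_add_le _ _).trans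
      (add_le_add (ih (fun k hk => hlink k (hk.trans (lt_add_one K))) B hB) hAB)

theorem exists_forall_abs_localDiscrepancy_le_of_isBracketingCover [IsProbabilityMeasure μ]
    [Nonempty κ] (h𝒟 : ∀ D ∈ 𝒟, MeasurableSet D) {𝒞 : ℕ → Finset (Set Ω)} {δ a : ℕ → ℝ} {K : ℕ}
    (h𝒞 : ∀ k, IsBracketingCover μ 𝒟 (δ k) (𝒞 k)) (h𝒞0 : ∀ A ∈ 𝒞 0, A = ∅ ∨ A = Set.univ)
    (ha : ∀ k < K, 0 < a k) (haδ : ∀ k < K, a k ≤ 2 * δ k)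
    (hsum : ∑ k ∈ range K,
      #(𝒞 (k + 1)) * (2 * exp (-(Fintype.card κ * a k ^ 2 / (4 * δ k)))) < 1) :
    ∃ z : κ → Ω, ∀ D ∈ 𝒟, |localDiscrepancy μ z D| ≤ ∑ k ∈ range K, a k + δ K := by
  have hmeas (k) {A : Set Ω} (hA : A ∈ 𝒞 k) : MeasurableSet A := h𝒟 A ((h𝒞 k).subset hA)
  choose! link hlink_mem hlink_subset hlink_le using
    fun k A (hA : A ∈ 𝒞 (k + 1)) => (h𝒞 k).exists_subset ((h𝒞 (k + 1)).subset hA)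
  have hbad : ∑ p ∈ (range K).sigma fun k => 𝒞 (k + 1), (Measure.pi fun _ : κ => μ).real
      {z | a p.1 ≤ |localDiscrepancy μ z (p.2 \ link p.1 p.2)|} < 1 := by
    rw [sum_sigma]
    refine (sum_le_sum fun k hk => ?_).trans_lt hsum
    rw [mem_range] at hk
    rw [← nsmul_eq_mul]
    refine sum_le_card_nsmul _ _ _ fun A hA => ?_
    exact measure_abs_localDiscrepancy_ge_le_two_mul_exp μ
      ((hmeas _ hA).diff (hmeas _ (hlink_mem k A hA))) (hlink_le k A hA) (ha k hk) (haδ k hk)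
  obtain ⟨z, hz⟩ := exists_forall_notMem_of_sum_measureReal_lt_one hbad
  have hchain : ∀ A ∈ 𝒞 K, |localDiscrepancy μ z A| ≤ ∑ k ∈ range K, a k := by
    refine abs_localDiscrepancy_le_sum_of_chain (fun A hA => ?_) fun k hk A hA =>
      ⟨link k A, hlink_mem k A hA, hmeas k (hlink_mem k A hA), hlink_subset k A hA, ?_⟩
    · rcases h𝒞0 A hA with rfl | rfl <;> simp
    · exact (not_le.1 (hz ⟨k, A⟩ (mem_sigma.2 ⟨mem_range.2 hk, hA⟩))).le
  refine ⟨z, fun D hD => ?_⟩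
  obtain ⟨A, hA, B, hB, hAD, hDB, hδ⟩ := (h𝒞 K).exists_bracket D hD
  exact (abs_localDiscrepancy_le_of_bracket μ z (hmeas K hA) (h𝒟 D hD) hAD hDB (hchain A hA)
    (hchain B hB)).trans (by gcongr)

end Chaining

section CubeCover

variable {ι : Type*}

variable (ι) in
/-- The boxes `[0, x]` in the unit cube, together with the empty set, which serves as the lower
bracket of boxes of small volume. -/
def anchoredBoxes : Set (Set (ι → I)) :=
  insert ∅ (Set.range Set.Iic)

theorem measurableSet_of_mem_anchoredBoxes [Countable ι] {D : Set (ι → I)}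
    (hD : D ∈ anchoredBoxes ι) : MeasurableSet D := by
  rcases hD with rfl | ⟨x, rfl⟩
  · exact .empty
  · exact measurableSet_Iic

/-- The anchored box whose upper corner is the point of the geometric grid with exponents `m`.
Its volume depends on `∑ i, m i` only. -/
def gridBox (q : I) (m : ι → ℕ) : Set (ι → I) :=
  Set.Iic fun i => q ^ m i

variable {q : I}

theorem gridBox_anti {m m' : ι → ℕ} (h : m ≤ m') : gridBox q m' ⊆ gridBox q m :=
  Set.Iic_subset_Iic.2 fun i => pow_le_pow_right_of_le_one' q.2.2 (h i)

variable [Fintype ι]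

theorem volume_real_Iic_unitInterval (x : ι → I) :
    volume.real (Set.Iic x) = ∏ i, (x i : ℝ) := by
  simp [measureReal_def, ← Set.pi_univ_Iic, volume_pi_pi, unitInterval.volume_Iic,
    ENNReal.toReal_prod, (x _).2.1]

theorem volume_real_gridBox (m : ι → ℕ) : volume.real (gridBox q m) = (q : ℝ) ^ ∑ i, m i := by
  simp [gridBox, volume_real_Iic_unitInterval, prod_pow_eq_pow_sum]

theorem volume_real_gridBox_sdiff_le (m : ι → ℕ) :
    volume.real (gridBox q m \ gridBox q (m + 1)) ≤ 1 - (q : ℝ) ^ Fintype.card ι := by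
  have hpow (n : ℕ) : (q : ℝ) ^ n ≤ 1 := pow_le_one₀ q.2.1 q.2.2
  have hdiff : volume.real (gridBox q m \ gridBox q (m + 1)) =
      (q : ℝ) ^ (∑ i, m i) * (1 - (q : ℝ) ^ Fintype.card ι) := by
    rw [measureReal_sdiff (gridBox_anti le_self_add) measurableSet_Iic, volume_real_gridBox,
      volume_real_gridBox]
    simp [sum_add_distrib, pow_add, mul_sub]
  rw [hdiff]
  exact mul_le_of_le_one_left (sub_nonneg.2 (hpow _)) (hpow _)

theorem exists_gridBox_bracket (hq0 : 0 < q) (hq1 : q < 1) (x : ι → I) (n : ℕ) :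
    ∃ m : ι → ℕ, Set.Iic x ⊆ gridBox q m ∧
      (gridBox q (m + 1) ⊆ Set.Iic x ∨ n ≤ ∑ i, m i) := by
  -- The second alternative caters for `x i = 0`, which has no positive grid point below it.
  have hround (i) : ∃ j : ℕ, x i ≤ q ^ j ∧ (q ^ (j + 1) ≤ x i ∨ n ≤ j) := by
    rcases eq_or_lt_of_le (x i).2.1 with hx | hx
    · exact ⟨n, by rw [show x i = 0 from Subtype.ext hx.symm]; exact zero_le, .inr le_rfl⟩
    · obtain ⟨j, hlt, hle⟩ := exists_nat_pow_near_of_lt_one hx (x i).2.2 hq0 hq1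
      exact ⟨j, by exact_mod_cast hle, .inl (by exact_mod_cast hlt.le)⟩
  choose m hupper hlower using hround
  refine ⟨m, Set.Iic_subset_Iic.2 hupper, ?_⟩
  by_cases hn : ∃ i, n ≤ m i
  · obtain ⟨i, hi⟩ := hn
    exact .inr (hi.trans (single_le_sum (fun _ _ => Nat.zero_le _) (mem_univ i)))
  · rw [not_exists] at hn
    exact .inl (Set.Iic_subset_Iic.2 fun i => (hlower i).resolve_right (hn i))

variable (ι) in
open Classical in
/-- The bracketing cover of the anchored boxes made of the empty set and of the grid boxes of volume
at least `q ^ n`, that is, with `∑ i, m i ≤ n`. -/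
noncomputable def gridCover (q : I) (n : ℕ) : Finset (Set (ι → I)) :=
  insert ∅ ((range (n + 1)).biUnion fun j =>
    (finsuppAntidiag univ j).image fun m : ι →₀ ℕ => gridBox q m)

theorem empty_mem_gridCover (n : ℕ) : ∅ ∈ gridCover ι q n := by
  simp [gridCover]

theorem gridBox_mem_gridCover {m : ι → ℕ} {n : ℕ} (h : ∑ i, m i ≤ n) :
    gridBox q m ∈ gridCover ι q n := by
  classical
  refine mem_insert_of_mem (mem_biUnion.2 ⟨∑ i, m i, mem_range.2 (Nat.lt_succ_of_le h),
    mem_image.2 ⟨Finsupp.equivFunOnFinite.symm m, ?_, rfl⟩⟩)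
  simp

theorem gridCover_subset_anchoredBoxes (n : ℕ) : ↑(gridCover ι q n) ⊆ anchoredBoxes ι := by
  intro D hD
  simp only [gridCover, coe_insert, Set.mem_insert_iff, mem_coe, mem_biUnion, mem_image] at hD
  rcases hD with rfl | ⟨j, -, m, -, rfl⟩
  · exact Set.mem_insert _ _
  · exact .inr ⟨_, rfl⟩

theorem card_gridCover_le (n : ℕ) :
    #(gridCover ι q n) ≤ (n + Fintype.card ι).choose (Fintype.card ι) + 1 := by
  classical
  refine (card_insert_le _ _).trans (Nat.add_le_add_right ?_ 1)
  calc _ ≤ ∑ j ∈ range (n + 1), #((finsuppAntidiag univ j).image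
        fun m : ι →₀ ℕ => gridBox q m) := card_biUnion_le
    _ ≤ ∑ j ∈ range (n + 1), (Fintype.card ι).multichoose j := sum_le_sum fun j _ =>
        card_image_le.trans_eq (card_finsuppAntidiag_nat_eq_multichoose j)
    _ = _ := Nat.sum_range_multichoose _ _

theorem isBracketingCover_gridCover (hq0 : 0 < q) (hq1 : q < 1) {n : ℕ} {δ : ℝ}
    (hqδ : 1 - (q : ℝ) ^ Fintype.card ι ≤ δ) (hnδ : (q : ℝ) ^ n ≤ δ) :
    IsBracketingCover volume (anchoredBoxes ι) δ (gridCover ι q (n + Fintype.card ι)) where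
  subset := gridCover_subset_anchoredBoxes _
  exists_bracket := by
    rintro D (rfl | ⟨x, rfl⟩)
    · exact ⟨∅, empty_mem_gridCover _, ∅, empty_mem_gridCover _, subset_rfl, subset_rfl,
        by simpa using (pow_nonneg q.2.1 n).trans hnδ⟩
    obtain ⟨m, hupper, hm⟩ := exists_gridBox_bracket hq0 hq1 x n
    by_cases hn : n ≤ ∑ i, m i
    · obtain ⟨m', hle, hdeg⟩ := (Finsupp.equivFunOnFinite.symm m).exists_le_degree_eq n
        (by simpa [Finsupp.degree_eq_sum] using hn)
      rw [Finsupp.degree_eq_sum] at hdeg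
      exact ⟨∅, empty_mem_gridCover _, gridBox q m', gridBox_mem_gridCover (by lia),
        Set.empty_subset _, hupper.trans (gridBox_anti hle),
        by rwa [Set.sdiff_empty, volume_real_gridBox, hdeg]⟩
    · exact ⟨gridBox q (m + 1), gridBox_mem_gridCover (by simp [sum_add_distrib]; lia),
        gridBox q m, gridBox_mem_gridCover (by lia), hm.resolve_right hn, hupper,
        (volume_real_gridBox_sdiff_le m).trans hqδ⟩

theorem choose_mul_add_one_le {s : ℕ} (hs : s ≠ 0) (n : ℕ) :
    ((s * n).choose s : ℝ) + 1 ≤ (exp 1 * (n + 1)) ^ s := by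
  have hchoose : ((s * n).choose s : ℝ) ≤ (exp 1 * n) ^ s :=
    calc ((s * n).choose s : ℝ) ≤ (s * n : ℕ) ^ s / s.factorial := Nat.choose_le_pow_div s (s * n)
      _ = s ^ s / s.factorial * n ^ s := by push_cast; ring
      _ ≤ exp s * n ^ s := by gcongr; exact pow_div_factorial_le_exp _ (by positivity) _
      _ = (exp 1 * n) ^ s := by rw [mul_pow, ← exp_nat_mul, mul_one]
  have he : 1 ≤ exp 1 := one_le_exp zero_le_one
  calc ((s * n).choose s : ℝ) + 1 ≤ (exp 1 * n) ^ s + 1 ^ s := by simpa using hchoose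
    _ ≤ (exp 1 * n + 1) ^ s := pow_add_pow_le (by positivity) zero_le_one hs
    _ ≤ (exp 1 * (n + 1)) ^ s := by gcongr; linarith

theorem one_sub_le_one_sub_div_pow {δ : ℝ} {s : ℕ} (hs : s ≠ 0) (hδ : δ ≤ 2) :
    1 - δ ≤ (1 - δ / s) ^ s := by
  have hs1 : (1 : ℝ) ≤ s := by exact_mod_cast Nat.one_le_iff_ne_zero.2 hs
  have hδs : δ / s ≤ 2 := (div_le_iff₀ (by linarith)).2 (by linarith)
  calc 1 - δ = 1 + s * -(δ / s) := by field_simp; ring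
    _ ≤ (1 + -(δ / s)) ^ s := one_add_mul_le_pow (by linarith) s
    _ = (1 - δ / s) ^ s := by rw [← sub_eq_add_neg]

theorem exists_isBracketingCover_anchoredBoxes_card_le [Nonempty ι] {δ : ℝ} (hδ0 : 0 < δ)
    (hδ1 : δ < 1) {L : ℕ} (hL : exp (-(δ * L)) ≤ δ) :
    ∃ 𝒞, IsBracketingCover volume (anchoredBoxes ι) δ 𝒞 ∧
      (#𝒞 : ℝ) ≤ (exp 1 * (L + 3)) ^ Fintype.card ι := by
  set s := Fintype.card ι
  have hs : (1 : ℝ) ≤ s := by exact_mod_cast Fintype.card_pos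
  have hδs0 : 0 < δ / s := by positivity
  have hδs1 : δ / s < 1 := by rw [div_lt_one (by linarith)]; linarith
  let q : I := ⟨1 - δ / s, by linarith, by linarith⟩
  have hq0 : 0 < q := Subtype.coe_lt_coe.1 (by simpa [q] using hδs1)
  have hq1 : q < 1 := Subtype.coe_lt_coe.1 (by simpa [q] using hδs0)
  have hmesh : 1 - (q : ℝ) ^ s ≤ δ :=
    sub_le_comm.1 (one_sub_le_one_sub_div_pow Fintype.card_ne_zero (by linarith))
  have hsmall : (q : ℝ) ^ (s * L) ≤ δ :=
    calc (q : ℝ) ^ (s * L) = ((1 - δ / s) ^ s) ^ L := pow_mul _ _ _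
      _ ≤ exp (-δ) ^ L :=
          pow_le_pow_left₀ (pow_nonneg q.2.1 s) (one_sub_div_pow_le_exp_neg (by linarith)) L
      _ = exp (-(δ * L)) := by rw [← exp_nat_mul, mul_neg, mul_comm]
      _ ≤ δ := hL
  have hcard : #(gridCover ι q (s * L + s)) ≤ (s * (L + 2)).choose s + 1 := by
    rw [show s * (L + 2) = s * L + s + s by ring]
    exact card_gridCover_le _
  refine ⟨_, isBracketingCover_gridCover hq0 hq1 hmesh hsmall, ?_⟩
  calc (#(gridCover ι q (s * L + s)) : ℝ) ≤ ((s * (L + 2)).choose s : ℝ) + 1 := by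
        exact_mod_cast hcard
    _ ≤ (exp 1 * ((L + 2 : ℕ) + 1)) ^ s := choose_mul_add_one_le Fintype.card_ne_zero _
    _ = (exp 1 * (L + 3)) ^ s := by push_cast; ring

theorem exists_isBracketingCover_anchoredBoxes_of_mesh [Nonempty ι] (k : ℕ) :
    ∃ 𝒞, IsBracketingCover volume (anchoredBoxes ι) ((1 / 16) ^ (k + 1)) 𝒞 ∧
      (#𝒞 : ℝ) ≤ (exp 1 * 64 ^ (k + 1)) ^ Fintype.card ι := by
  have hexp : exp (-3) ≤ 1 / 16 := by
    rw [exp_neg, one_div]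
    gcongr
    calc (16 : ℝ) ≤ 2.7182818283 ^ 3 := by norm_num
      _ ≤ exp 1 ^ 3 := by gcongr; exact exp_one_gt_d9.le
      _ = exp 3 := exp_one_pow 3
  -- Solving `exp (-(δ * L)) ≤ δ` for the mesh `δ = (1 / 16) ^ (k + 1)` by `exp (-3) ≤ 1 / 16`.
  have hL : exp (-((1 / 16) ^ (k + 1) * (3 * (k + 1) * 16 ^ (k + 1) : ℕ))) ≤ (1 / 16) ^ (k + 1) :=
    calc exp (-((1 / 16) ^ (k + 1) * (3 * (k + 1) * 16 ^ (k + 1) : ℕ)))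
        = exp (-3) ^ (k + 1) := by
          rw [← exp_nat_mul, one_div_pow]
          congr 1
          push_cast
          field_simp
      _ ≤ (1 / 16) ^ (k + 1) := by gcongr
  obtain ⟨𝒞, h𝒞, hcard⟩ := exists_isBracketingCover_anchoredBoxes_card_le (ι := ι)
    (by positivity) (pow_lt_one₀ (by norm_num) (by norm_num) k.succ_ne_zero) hL
  refine ⟨𝒞, h𝒞, hcard.trans ?_⟩
  gcongr
  have hthree : (3 : ℝ) ≤ 16 ^ (k + 1) :=
    (by norm_num : (3 : ℝ) ≤ 16).trans (le_self_pow₀ (by norm_num) k.succ_ne_zero)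
  calc ((3 * (k + 1) * 16 ^ (k + 1) : ℕ) + 3 : ℝ) ≤ (1 + (k + 1 : ℕ) * 3) * 16 ^ (k + 1) := by
        push_cast
        linarith
    _ ≤ (1 + 3) ^ (k + 1) * 16 ^ (k + 1) := by gcongr; exact one_add_mul_le_pow (by norm_num) _
    _ = 64 ^ (k + 1) := by rw [← mul_pow]; norm_num

variable (ι) in
theorem exists_isBracketingCover_anchoredBoxes_seq [Nonempty ι] :
    ∃ 𝒞 : ℕ → Finset (Set (ι → I)), 𝒞 0 = {∅, Set.univ} ∧
      (∀ k, IsBracketingCover volume (anchoredBoxes ι) ((1 / 16) ^ k) (𝒞 k)) ∧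
      ∀ k, (#(𝒞 (k + 1)) : ℝ) ≤ (exp 1 * 64 ^ (k + 1)) ^ Fintype.card ι := by
  choose 𝒞 h𝒞 hcard using exists_isBracketingCover_anchoredBoxes_of_mesh (ι := ι)
  refine ⟨fun k => Nat.casesOn k {∅, Set.univ} 𝒞, rfl, ?_, hcard⟩
  rintro (- | k)
  · rw [pow_zero]
    exact isBracketingCover_empty_univ (Set.mem_insert _ _) (.inr ⟨⊤, Set.Iic_top⟩)
  · exact h𝒞 k

end CubeCover

section StarDiscrepancy

theorem exp_one_mul_pow_mul_exp_neg_sq_le (k : ℕ) :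
    exp 1 * 64 ^ (k + 1) * exp (-(3 + k) ^ 2) ≤ (1 / 4) ^ (k + 1) := by
  have hbase : 64 * exp (-6) ≤ 1 / 4 := by
    rw [exp_neg, ← div_eq_mul_inv, div_le_iff₀ (exp_pos _)]
    calc (64 : ℝ) ≤ 1 / 4 * 2.7182818283 ^ 6 := by norm_num
      _ ≤ 1 / 4 * exp 1 ^ 6 := by gcongr; exact exp_one_gt_d9.le
      _ = 1 / 4 * exp 6 := by rw [exp_one_pow]; norm_num
  calc exp 1 * 64 ^ (k + 1) * exp (-(3 + k) ^ 2)
      = 64 ^ (k + 1) * exp (1 - (3 + k) ^ 2) := by rw [sub_eq_add_neg, exp_add]; ring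
    _ ≤ 64 ^ (k + 1) * exp ((k + 1 : ℕ) * (-6)) := by
        gcongr
        push_cast
        nlinarith [sq_nonneg (k : ℝ)]
    _ = (64 * exp (-6)) ^ (k + 1) := by rw [exp_nat_mul, mul_pow]
    _ ≤ (1 / 4) ^ (k + 1) := by gcongr

theorem sum_exp_one_mul_pow_mul_exp_lt_one {s : ℕ} (hs : s ≠ 0) (K : ℕ) :
    ∑ k ∈ range K, (exp 1 * 64 ^ (k + 1)) ^ s * (2 * exp (-(s * (3 + k) ^ 2))) < 1 := by
  have hterm (k : ℕ) : (exp 1 * 64 ^ (k + 1)) ^ s * (2 * exp (-(s * (3 + k) ^ 2))) ≤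
      1 / 2 * (1 / 4) ^ k :=
    calc (exp 1 * 64 ^ (k + 1)) ^ s * (2 * exp (-(s * (3 + k) ^ 2)))
        = 2 * (exp 1 * 64 ^ (k + 1) * exp (-(3 + k) ^ 2)) ^ s := by
          rw [mul_pow _ (exp _), ← exp_nat_mul, mul_neg]
          ring
      _ ≤ 2 * ((1 / 4) ^ (k + 1)) ^ s := by gcongr; exact exp_one_mul_pow_mul_exp_neg_sq_le k
      _ ≤ 2 * (1 / 4) ^ (k + 1) := by
          gcongr
          exact pow_le_of_le_one (by positivity) (pow_le_one₀ (by norm_num) (by norm_num)) hs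
      _ = 1 / 2 * (1 / 4) ^ k := by rw [pow_succ]; ring
  calc ∑ k ∈ range K, (exp 1 * 64 ^ (k + 1)) ^ s * (2 * exp (-(s * (3 + k) ^ 2)))
      ≤ ∑ k ∈ range K, 1 / 2 * (1 / 4 : ℝ) ^ k := sum_le_sum fun k _ => hterm k
    _ ≤ 1 / 2 * (1 - 1 / 4)⁻¹ :=
        sum_le_hasSum _ (fun _ _ => by positivity)
          ((hasSum_geometric_of_lt_one (by norm_num) (by norm_num)).mul_left _)
    _ < 1 := by norm_num

theorem sum_two_mul_three_add_mul_pow_le (K : ℕ) :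
    ∑ k ∈ range K, 2 * (3 + k : ℝ) * (1 / 4) ^ k ≤ 9 := by
  have hlinear : HasSum (fun k : ℕ => (k : ℝ) * (1 / 4) ^ k) (1 / 4 / (1 - 1 / 4) ^ 2) :=
    hasSum_coe_mul_geometric_of_norm_lt_one (by norm_num)
  have hgeom : HasSum (fun k : ℕ => (1 / 4 : ℝ) ^ k) (1 - 1 / 4)⁻¹ :=
    hasSum_geometric_of_lt_one (by norm_num) (by norm_num)
  calc ∑ k ∈ range K, 2 * (3 + k : ℝ) * (1 / 4) ^ k
      = ∑ k ∈ range K, (6 * (1 / 4 : ℝ) ^ k + 2 * (k * (1 / 4) ^ k)) :=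
        sum_congr rfl fun k _ => by ring
    _ ≤ 6 * (1 - 1 / 4)⁻¹ + 2 * (1 / 4 / (1 - 1 / 4) ^ 2) :=
        sum_le_hasSum _ (fun _ _ => by positivity) ((hgeom.mul_left 6).add (hlinear.mul_left 2))
    _ ≤ 9 := by norm_num

theorem three_add_mul_pow_le (k : ℕ) : (3 + k : ℝ) * (1 / 4) ^ k ≤ 4 := by
  have hpow : 1 + (k : ℝ) * 3 ≤ 4 ^ k :=
    (one_add_mul_le_pow (by norm_num) k).trans_eq (by norm_num)
  rw [one_div_pow, mul_one_div, div_le_iff₀ (by positivity)]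
  linarith [k.cast_nonneg (α := ℝ)]

theorem mul_sq_deviation_div_mesh (N ε : ℝ) (k : ℕ) :
    N * (2 * (3 + k) * (1 / 4) ^ k * ε) ^ 2 / (4 * (1 / 16) ^ k) = N * ε ^ 2 * (3 + k) ^ 2 := by
  have hmesh : ((1 / 16) ^ k : ℝ) = ((1 / 4) ^ k) ^ 2 := by
    rw [pow_right_comm]
    norm_num
  rw [hmesh]
  field_simp
  ring

theorem exists_pow_le_forall_lt_le_pow {r c : ℝ} (hr : r < 1) (hc : 0 < c) :
    ∃ K : ℕ, r ^ K ≤ c ∧ ∀ k < K, c ≤ r ^ k := by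
  classical
  have hex : ∃ K : ℕ, r ^ K ≤ c := (exists_pow_lt_of_lt_one hc hr).imp fun _ => le_of_lt
  exact ⟨Nat.find hex, Nat.find_spec hex, fun k hk => (not_le.1 (Nat.find_min hex hk)).le⟩

theorem exists_forall_abs_localDiscrepancy_Iic_le (ι κ : Type*) [Fintype ι] [Fintype κ]
    [Nonempty ι] [Nonempty κ] : ∃ z : κ → ι → I, ∀ x : ι → I,
      |localDiscrepancy volume z (Set.Iic x)| ≤ 13 * (√(Fintype.card ι) / √(Fintype.card κ)) := by
  set s := Fintype.card ι
  set N := Fintype.card κ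
  set ε : ℝ := √s / √N with hε
  have hs : (0 : ℝ) < s := by positivity
  have hN : (0 : ℝ) < N := by positivity
  have hε0 : 0 < ε := by positivity
  have hε_sq : N * ε ^ 2 = s := by
    rw [hε, div_pow, sq_sqrt hs.le, sq_sqrt hN.le, mul_div_cancel₀ _ hN.ne']
  obtain ⟨K, hK, hK_min⟩ := exists_pow_le_forall_lt_le_pow (r := 1 / 16) (by norm_num)
    (mul_pos four_pos hε0)
  obtain ⟨𝒞, h𝒞0, h𝒞, hcard⟩ := exists_isBracketingCover_anchoredBoxes_seq ι
  -- The deviation `2 * (3 + k) * (1 / 4) ^ k * ε` allowed at level `k` makes the Bernstein exponent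
  -- equal to `s * (3 + k) ^ 2`, more than the logarithm of the number of sets of level `k + 1`.
  have hdev (k) (hk : k < K) : 2 * (3 + k) * (1 / 4) ^ k * ε ≤ 2 * (1 / 16) ^ k :=
    calc 2 * (3 + k) * (1 / 4) ^ k * ε = 2 * ((3 + k) * (1 / 4) ^ k * ε) := by ring
      _ ≤ 2 * (4 * ε) := by gcongr; exact three_add_mul_pow_le k
      _ ≤ 2 * (1 / 16) ^ k := by gcongr; exact hK_min k hk
  have hsum : ∑ k ∈ range K, #(𝒞 (k + 1)) * (2 * exp (-(N *
      (2 * (3 + k) * (1 / 4) ^ k * ε) ^ 2 / (4 * (1 / 16) ^ k)))) < 1 := by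
    refine (sum_le_sum fun k _ => ?_).trans_lt
      (sum_exp_one_mul_pow_mul_exp_lt_one (s := s) Fintype.card_ne_zero K)
    rw [mul_sq_deviation_div_mesh, hε_sq]
    gcongr
    exact hcard k
  obtain ⟨z, hz⟩ := exists_forall_abs_localDiscrepancy_le_of_isBracketingCover (κ := κ)
    (fun D => measurableSet_of_mem_anchoredBoxes) h𝒞 (by simp [h𝒞0])
    (fun k _ => by positivity) hdev hsum
  refine ⟨z, fun x => (hz _ (.inr ⟨x, rfl⟩)).trans ?_⟩
  rw [← sum_mul]
  linarith [mul_le_mul_of_nonneg_right (sum_two_mul_three_add_mul_pow_le K) hε0.le]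

theorem starDiscrepancy_le_of_forall_abs_localDiscrepancy_Iic_le {s N : ℕ}
    {z : Fin N → Fin s → I} {c : ℝ}
    (h : ∀ x, |localDiscrepancy volume z (Set.Iic x)| ≤ c) :
    starDiscrepancy s N (fun n i => z n i) ≤ c := by
  have : Nonempty (Set.Icc (0 : Fin s → ℝ) 1) := ⟨⟨0, le_rfl, zero_le_one⟩⟩
  refine ciSup_le fun ⟨x, hx0, hx1⟩ => ?_
  let y : Fin s → I := fun i => ⟨x i, hx0 i, hx1 i⟩
  have hmem (n : Fin N) : (fun i => (z n i : ℝ)) ∈ Set.Icc 0 x ↔ z n ∈ Set.Iic y :=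
    ⟨fun hn => hn.2, fun hn => ⟨fun i => (z n i).2.1, hn⟩⟩
  have hdisc : localDiscrepancy volume z (Set.Iic y) =
      (Nat.card {n : Fin N // (fun i => (z n i : ℝ)) ∈ Set.Icc 0 x} : ℝ) / N - ∏ i, x i := by
    classical
    simp only [hmem, localDiscrepancy, volume_real_Iic_unitInterval, Fintype.card_fin,
      Nat.card_eq_fintype_card, Fintype.card_subtype, ← sum_boole, Set.indicator_apply,
      Pi.one_apply, y]
  change |_| ≤ c
  rw [← hdisc]
  exact h y

end StarDiscrepancy

theorem stmt_2 (s N : ℕ) (hs : 1 ≤ s) (hN : 1 ≤ N) :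
    ∃ z : Fin N → (Fin s → ℝ), (∀ n, z n ∈ Set.Icc (0 : Fin s → ℝ) 1) ∧
      starDiscrepancy s N z ≤ 13 * (Real.sqrt s / Real.sqrt N) := by
  have : NeZero s := ⟨by lia⟩
  have : NeZero N := ⟨by lia⟩
  obtain ⟨z, hz⟩ := exists_forall_abs_localDiscrepancy_Iic_le (Fin s) (Fin N)
  simp only [Fintype.card_fin] at hz
  exact ⟨fun n i => z n i, fun n => ⟨fun i => (z n i).2.1, fun i => (z n i).2.2⟩,
    starDiscrepancy_le_of_forall_abs_localDiscrepancy_Iic_le hz⟩
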